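/- arXiv:1407.2192 — 2 statements merged into one kernel-verified Lean document; each statement's English description precedes it below -/
import Mathlib

section
/- Let (Ω, F, Q) be a probability space with a filtration (F_k)_{k∈ℕ}, Δt > 0, and let (N_k)_{k≥1} be ℕ-valued random variables such that each N_k is F_k-measurable, is independent of F_{k−1}, and has law Poisson(Δt) under Q. Let (λ_k)_{k≥1} be real-valued random variables with each λ_k F_{k−1}-measurable and 0 < λ_k ≤ C for a constant C. Define Z_0 := 1 and Z_k := Z_{k−1} · λ_k^{N_k} · exp(−(λ_k−1)·Δt). Then (Z_k)_{k∈ℕ} is a martingale with respect to (F_k) under Q, and E_Q[Z_k] = 1 for every k. (This is the discrete-time analogue of the first assertion of the paper's Theorem 1: the likelihood ratio Z_t = exp(∫₀ᵗ ln λ_s dY_s − ∫₀ᵗ (λ_s−1) ds) with predictable intensity λ is a Q-martingale with E_Q[Z_t] = 1.) -/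
open MeasureTheory ProbabilityTheory Real

open scoped ENNReal NNReal

/-!
The one-step factor `x ^ n * exp (-(x - 1) * r)` is the density of `Poisson(x * r)` with respect to
`Poisson(r)`, so it has mean one under `Poisson(r)` for every `x ≥ 0`. Since `N (k + 1)` is
independent of `F k`, conditioning on `F k` freezes `Z k` and the predictable intensity and
integrates out only `N (k + 1)`. Working with Lebesgue conditional expectations of the nonnegative
process `Z` gives integrability as a by-product of `E[Z k] = E[Z 0]`.
-/

section Independence

variable {Ω α β : Type*} {m m0 : MeasurableSpace Ω} [MeasurableSpace α] [MeasurableSpace β]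
  {P : Measure Ω} [IsFiniteMeasure P] {X : Ω → α} {Y : Ω → β}

theorem map_prodMk_restrict_of_indep (hm : m ≤ m0) (hX : Measurable[m] X) (hY : Measurable Y)
    (hind : Indep (MeasurableSpace.comap Y inferInstance) m P) {s : Set Ω}
    (hs : MeasurableSet[m] s) :
    (P.restrict s).map (fun ω ↦ (X ω, Y ω)) = ((P.restrict s).map X).prod (P.map Y) := by
  have hX0 : Measurable X := hX.mono hm le_rfl
  refine (Measure.prod_eq fun A B hA hB ↦ ?_).symm
  rw [Measure.map_apply (hX0.prodMk hY) (hA.prod hB), Measure.map_apply hX0 hA,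
    Measure.map_apply hY hB, Measure.restrict_apply (hX0.prodMk hY (hA.prod hB)),
    Measure.restrict_apply (hX0 hA)]
  calc P ((fun ω ↦ (X ω, Y ω)) ⁻¹' A ×ˢ B ∩ s)
      = P (Y ⁻¹' B ∩ (X ⁻¹' A ∩ s)) := by
        rw [Set.mk_preimage_prod, Set.inter_comm (X ⁻¹' A), Set.inter_assoc]
    _ = P (Y ⁻¹' B) * P (X ⁻¹' A ∩ s) :=
        (Indep_iff _ _ P).1 hind _ _ ⟨B, hB, rfl⟩ ((hX hA).inter hs)
    _ = P (X ⁻¹' A ∩ s) * P (Y ⁻¹' B) := mul_comm _ _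

theorem condLExp_comp_prodMk_of_indep (hm : m ≤ m0) (hX : Measurable[m] X) (hY : Measurable Y)
    (hind : Indep (MeasurableSpace.comap Y inferInstance) m P) {f : α × β → ℝ≥0∞}
    (hf : Measurable f) :
    P⁻[fun ω ↦ f (X ω, Y ω) | m] =ᵐ[P] fun ω ↦ ∫⁻ y, f (X ω, y) ∂(P.map Y) := by
  have hX0 : Measurable X := hX.mono hm le_rfl
  refine (ae_eq_condLExp hm P _ (hf.lintegral_prod_right'.comp hX) fun s hs ↦ ?_).symm
  calc ∫⁻ ω in s, ∫⁻ y, f (X ω, y) ∂(P.map Y) ∂P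
      = ∫⁻ x, ∫⁻ y, f (x, y) ∂(P.map Y) ∂((P.restrict s).map X) :=
        (lintegral_map hf.lintegral_prod_right' hX0).symm
    _ = ∫⁻ p, f p ∂(((P.restrict s).map X).prod (P.map Y)) :=
        (lintegral_prod f hf.aemeasurable).symm
    _ = ∫⁻ ω in s, f (X ω, Y ω) ∂P := by
        rw [← map_prodMk_restrict_of_indep hm hX hY hind hs, lintegral_map hf (hX0.prodMk hY)]

end Independence

section MultiplicativeProcess

variable {Ω : Type*} {Z L : ℕ → Ω → ℝ}

theorem stronglyAdapted_of_succ_eq_mul {m0 : MeasurableSpace Ω} {F : Filtration ℕ m0}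
    (hZ0 : StronglyMeasurable[F 0] (Z 0)) (hL : ∀ k, StronglyMeasurable[F (k + 1)] (L k))
    (hZ : ∀ k, Z (k + 1) = Z k * L k) : StronglyAdapted F Z := by
  intro k
  induction k with
  | zero => exact hZ0
  | succ k ih =>
    rw [hZ]
    exact (ih.mono (F.mono k.le_succ)).mul (hL k)

theorem nonneg_of_succ_eq_mul (hZ0 : 0 ≤ Z 0) (hL : ∀ k, 0 ≤ L k)
    (hZ : ∀ k, Z (k + 1) = Z k * L k) (k : ℕ) : 0 ≤ Z k := by
  induction k with
  | zero => exact hZ0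
  | succ k ih =>
    rw [hZ]
    exact mul_nonneg ih (hL k)

end MultiplicativeProcess

section Martingale

variable {Ω : Type*} {m0 : MeasurableSpace Ω} {P : Measure Ω} [IsFiniteMeasure P]
  {F : Filtration ℕ m0} {Z : ℕ → Ω → ℝ}

theorem martingale_of_condLExp_ofReal_succ (hadp : StronglyAdapted F Z) (hnonneg : ∀ k, 0 ≤ Z k)
    (hint : Integrable (Z 0) P)
    (hcond : ∀ k, P⁻[fun ω ↦ ENNReal.ofReal (Z (k + 1) ω) | F k]
      =ᵐ[P] fun ω ↦ ENNReal.ofReal (Z k ω)) :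
    Martingale Z F P := by
  have hmeas (k : ℕ) : StronglyMeasurable (Z k) := (hadp k).mono (F.le k)
  have hnonneg_ae (k : ℕ) : 0 ≤ᵐ[P] Z k := ae_of_all P (hnonneg k)
  have lintegral_ne_top_iff (k : ℕ) : ∫⁻ ω, ENNReal.ofReal (Z k ω) ∂P ≠ ∞ ↔ Integrable (Z k) P :=
    lintegral_ofReal_ne_top_iff_integrable (hmeas k).aestronglyMeasurable (hnonneg_ae k)
  have lintegral_succ (k : ℕ) :
      ∫⁻ ω, ENNReal.ofReal (Z (k + 1) ω) ∂P = ∫⁻ ω, ENNReal.ofReal (Z k ω) ∂P := by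
    rw [← lintegral_condLExp (F.le k), lintegral_congr_ae (hcond k)]
  have integrable (k : ℕ) : Integrable (Z k) P := by
    induction k with
    | zero => exact hint
    | succ k ih => rwa [← lintegral_ne_top_iff, lintegral_succ, lintegral_ne_top_iff]
  refine martingale_nat hadp integrable fun k ↦ ?_
  filter_upwards [hcond k, condLExp_ofReal (F k) (integrable (k + 1)) (hnonneg_ae (k + 1)),
    condExp_nonneg (m := F k) (hnonneg_ae (k + 1))] with ω hω hω_ofReal hω_nonneg
  exact (ENNReal.ofReal_eq_ofReal_iff (hnonneg k ω) hω_nonneg).1 (hω.symm.trans hω_ofReal)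

end Martingale

section Poisson

/-- The likelihood ratio of `Poisson(x * r)` with respect to `Poisson(r)` at the outcome `n`,
for an intensity `x` and an interval of length `r`. The arguments are real, so that it applies
directly to real-valued intensities, but it is a likelihood ratio only for `0 ≤ x` and `0 ≤ r`. -/
noncomputable def poissonLikelihoodRatio (r x : ℝ) (n : ℕ) : ℝ :=
  x ^ n * exp (-(x - 1) * r)

theorem poissonLikelihoodRatio_nonneg {x : ℝ} (hx : 0 ≤ x) (r : ℝ) (n : ℕ) :
    0 ≤ poissonLikelihoodRatio r x n := by
  unfold poissonLikelihoodRatio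
  positivity

theorem measurable_poissonLikelihoodRatio (r : ℝ) :
    Measurable fun p : ℝ × ℕ ↦ poissonLikelihoodRatio r p.1 p.2 := by
  unfold poissonLikelihoodRatio
  fun_prop

theorem withDensity_poissonLikelihoodRatio (r x : ℝ≥0) :
    (poissonMeasure r).withDensity (fun n ↦ ENNReal.ofReal (poissonLikelihoodRatio r x n)) =
      poissonMeasure (x * r) := by
  refine Measure.ext_of_singleton fun n ↦ ?_
  have hexp : exp (-(x * r : ℝ)) = exp (-(x - 1) * r) * exp (-r) := by
    rw [← exp_add]
    ring_nf
  rw [withDensity_apply _ (measurableSet_singleton n), lintegral_singleton,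
    poissonMeasure_singleton, poissonMeasure_singleton,
    ← ENNReal.ofReal_mul (poissonLikelihoodRatio_nonneg x.coe_nonneg r n), poissonLikelihoodRatio,
    NNReal.coe_mul, hexp, mul_pow]
  ring_nf

theorem lintegral_poissonLikelihoodRatio (r : ℝ≥0) {x : ℝ} (hx : 0 ≤ x) :
    ∫⁻ n, ENNReal.ofReal (poissonLikelihoodRatio r x n) ∂(poissonMeasure r) = 1 := by
  lift x to ℝ≥0 using hx
  rw [← setLIntegral_univ, ← withDensity_apply _ MeasurableSet.univ,
    withDensity_poissonLikelihoodRatio, measure_univ]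

theorem condLExp_mul_poissonLikelihoodRatio {Ω : Type*} {m m0 : MeasurableSpace Ω}
    {P : Measure Ω} [IsFiniteMeasure P] (hm : m ≤ m0) {r : ℝ≥0} {N : Ω → ℕ} (hN : Measurable N)
    (hind : Indep (MeasurableSpace.comap N inferInstance) m P)
    (hlaw : P.map N = poissonMeasure r) {lam A : Ω → ℝ} (hlam : Measurable[m] lam)
    (hlam_nonneg : 0 ≤ lam) (hA : Measurable[m] A) (hA_nonneg : 0 ≤ A) :
    P⁻[fun ω ↦ ENNReal.ofReal (A ω * poissonLikelihoodRatio r (lam ω) (N ω)) | m]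
      =ᵐ[P] fun ω ↦ ENNReal.ofReal (A ω) := by
  have hf : Measurable fun p : (ℝ × ℝ) × ℕ ↦
      ENNReal.ofReal (p.1.1 * poissonLikelihoodRatio r p.1.2 p.2) :=
    (measurable_fst.fst.mul ((measurable_poissonLikelihoodRatio r).comp
      (measurable_fst.snd.prodMk measurable_snd))).ennreal_ofReal
  refine (condLExp_comp_prodMk_of_indep hm (hA.prodMk hlam) hN hind hf).trans
    (ae_of_all P fun ω ↦ ?_)
  simp only [hlaw, ENNReal.ofReal_mul (hA_nonneg ω)]
  rw [lintegral_const_mul _ (measurable_of_countable _),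
    lintegral_poissonLikelihoodRatio r (hlam_nonneg ω), mul_one]

end Poisson

theorem likelihood_ratio_martingale_general {Ω : Type*} [m0 : MeasurableSpace Ω]
    (Q : Measure Ω) [IsProbabilityMeasure Q] (F : Filtration ℕ m0)
    (Δt : ℕ → ℝ) (hΔt : ∀ k, 1 ≤ k → 0 ≤ Δt k)
    (N : ℕ → Ω → ℕ)
    (hNmeas : ∀ k, 1 ≤ k → Measurable[F k] (N k))
    (hNindep : ∀ k, 1 ≤ k →
      Indep (MeasurableSpace.comap (N k) inferInstance) (F (k - 1)) Q)
    (hNlaw : ∀ k, 1 ≤ k → Q.map (N k) = poissonMeasure (Δt k).toNNReal)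
    (lam : ℕ → Ω → ℝ)
    (hlammeas : ∀ k, 1 ≤ k → Measurable[F (k - 1)] (lam k))
    (hlamnonneg : ∀ k, 1 ≤ k → ∀ ω, 0 ≤ lam k ω)
    (Z : ℕ → Ω → ℝ)
    (hZ0 : ∀ ω, Z 0 ω = 1)
    (hZrec : ∀ k, 1 ≤ k → ∀ ω,
      Z k ω = Z (k - 1) ω * lam k ω ^ N k ω * Real.exp (-(lam k ω - 1) * Δt k)) :
    Martingale Z F Q ∧ ∀ k, ∫ ω, Z k ω ∂Q = 1 := by
  let L (k : ℕ) (ω : Ω) : ℝ :=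
    poissonLikelihoodRatio (Δt (k + 1)) (lam (k + 1) ω) (N (k + 1) ω)
  have hZ_zero : Z 0 = fun _ ↦ 1 := funext hZ0
  have hZ_succ (k : ℕ) : Z (k + 1) = Z k * L k :=
    funext fun ω ↦ (hZrec (k + 1) k.succ_pos ω).trans (mul_assoc _ _ _)
  have hL_meas (k : ℕ) : Measurable[F (k + 1)] (L k) :=
    (measurable_poissonLikelihoodRatio _).comp
      (((hlammeas (k + 1) k.succ_pos).mono (F.mono k.le_succ) le_rfl).prodMk
        (hNmeas (k + 1) k.succ_pos))
  have hadp : StronglyAdapted F Z := stronglyAdapted_of_succ_eq_mul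
    (hZ_zero ▸ stronglyMeasurable_const) (fun k ↦ (hL_meas k).stronglyMeasurable) hZ_succ
  have hnonneg : ∀ k, 0 ≤ Z k := nonneg_of_succ_eq_mul (hZ_zero ▸ fun _ ↦ zero_le_one)
    (fun k ω ↦ poissonLikelihoodRatio_nonneg (hlamnonneg (k + 1) k.succ_pos ω) _ _) hZ_succ
  have hcond (k : ℕ) : Q⁻[fun ω ↦ ENNReal.ofReal (Z (k + 1) ω) | F k]
      =ᵐ[Q] fun ω ↦ ENNReal.ofReal (Z k ω) := by
    have hstep := condLExp_mul_poissonLikelihoodRatio (F.le k)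
      ((hNmeas (k + 1) k.succ_pos).mono (F.le _) le_rfl) (hNindep (k + 1) k.succ_pos)
      (hNlaw (k + 1) k.succ_pos) (hlammeas (k + 1) k.succ_pos) (hlamnonneg (k + 1) k.succ_pos)
      (hadp k).measurable (hnonneg k)
    rw [Real.coe_toNNReal _ (hΔt (k + 1) k.succ_pos)] at hstep
    rw [hZ_succ]
    exact hstep
  have hmart : Martingale Z F Q :=
    martingale_of_condLExp_ofReal_succ hadp hnonneg (hZ_zero ▸ integrable_const 1) hcond
  refine ⟨hmart, fun k ↦ ?_⟩
  calc ∫ ω, Z k ω ∂Q = ∫ ω, Z 0 ω ∂Q := by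
        simpa only [setIntegral_univ] using (hmart.setIntegral_eq k.zero_le MeasurableSet.univ).symm
    _ = 1 := by simp [hZ_zero]

/-- Discrete-time analogue of the first assertion of Theorem 1 of the paper: the
likelihood ratio `Z_k = ∏_{i≤k} λ_i^{N_i} exp(−(λ_i−1)Δt)` built from unit-rate
(mean `Δt`) Poisson increments `N_k` and a predictable, positive, bounded intensity
`λ_k` is a `Q`-martingale with `E_Q[Z_k] = 1` for every `k`. -/
theorem likelihood_ratio_martingale {Ω : Type*} [m0 : MeasurableSpace Ω]
    (Q : Measure Ω) [IsProbabilityMeasure Q] (F : Filtration ℕ m0)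
    (Δt : ℝ) (hΔt : 0 < Δt)
    (N : ℕ → Ω → ℕ)
    (hNmeas : ∀ k, 1 ≤ k → Measurable[F k] (N k))
    (hNindep : ∀ k, 1 ≤ k →
      Indep (MeasurableSpace.comap (N k) inferInstance) (F (k - 1)) Q)
    (hNlaw : ∀ k, 1 ≤ k → Q.map (N k) = poissonMeasure Δt.toNNReal)
    (C : ℝ) (lam : ℕ → Ω → ℝ)
    (hlammeas : ∀ k, 1 ≤ k → Measurable[F (k - 1)] (lam k))
    (hlampos : ∀ k, 1 ≤ k → ∀ ω, 0 < lam k ω)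
    (hlambdd : ∀ k, 1 ≤ k → ∀ ω, lam k ω ≤ C)
    (Z : ℕ → Ω → ℝ)
    (hZ0 : ∀ ω, Z 0 ω = 1)
    (hZrec : ∀ k, 1 ≤ k → ∀ ω,
      Z k ω = Z (k - 1) ω * lam k ω ^ N k ω * Real.exp (-(lam k ω - 1) * Δt)) :
    Martingale Z F Q ∧ ∀ k, ∫ ω, Z k ω ∂Q = 1 :=
  likelihood_ratio_martingale_general Q F (fun _ ↦ Δt) (fun _ _ ↦ hΔt.le) N hNmeas hNindep hNlaw lam
    hlammeas (fun k hk ω ↦ (hlampos k hk ω).le) Z hZ0 hZrec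
end

section
/- Fix T > 0, finitely many jump times 0 < τ_1 < ⋯ < τ_n ≤ T, and a continuous function λ : [0,T] → ℝ with λ(s) > 0 for all s. Let Z_t := (∏_{i : τ_i ≤ t} λ(τ_i)) · exp(−∫₀ᵗ (λ(s) − 1) ds) and Z_{τ_i⁻} := (∏_{j < i} λ(τ_j)) · exp(−∫₀^{τ_i} (λ(s) − 1) ds); note Z_t > 0 for all t. Then for every t ∈ [0,T], Z_t^{−1} = 1 − ∑_{i : τ_i ≤ t} (λ(τ_i) − 1) / (λ(τ_i) · Z_{τ_i⁻}) + ∫₀ᵗ (λ(s) − 1) · Z_s^{−1} ds. (This is the pathwise form of the key identity of Appendix A of the paper, Ẑ_t^{−1} = 1 − ∫₀ᵗ ((λ̂_s − 1)/(λ̂_s Ẑ_{s−})) (dY_s − λ̂_s ds), obtained there by applying Itô's formula for semimartingales to f(x) = 1/x.) -/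
open MeasureTheory Finset

/-!
The family of jump exponentials `V_t = (∏_{τ_i ≤ t} a_i) · exp(−∫₀ᵗ f)` is closed under inversion:
`V⁻¹` is the jump exponential with jump factors `a_i⁻¹` and decay rate `-f`. Moreover every jump
exponential solves the linear equation
`V_t = 1 + ∑_{τ_i ≤ t} (a_i − 1) V_{τ_i⁻} − ∫₀ᵗ f V`. To see this, telescope the product into a step
function of `t`, multiply by the absolutely continuous factor `E = exp(−∫₀ f)`, and integrate by
parts, using `∫_{τ_i}^t f E = E_{τ_i} − E_t`. The inverse formula is this linear equation for `V⁻¹`.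
-/

section AbsolutelyContinuous

variable {a b c d : ℝ}

theorem absolutelyContinuousOnInterval_comp_of_lipschitzOnWith
    {X Y : Type*} [PseudoMetricSpace X] [PseudoMetricSpace Y] {φ : X → Y} {F : ℝ → X}
    {K : NNReal} {s : Set X} (hφ : LipschitzOnWith K φ s)
    (hF : AbsolutelyContinuousOnInterval F a b) (hFs : Set.MapsTo F (Set.uIcc a b) s) :
    AbsolutelyContinuousOnInterval (φ ∘ F) a b := by
  have hlim := Filter.Tendsto.const_mul (K : ℝ) hF
  rw [mul_zero] at hlim
  refine squeeze_zero' (.of_forall fun _ => sum_nonneg fun _ _ => dist_nonneg) ?_ hlim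
  filter_upwards [Filter.mem_inf_of_right (Filter.mem_principal_self _)] with I hI
  rw [mul_sum]
  exact sum_le_sum fun i hi => hφ.dist_le_mul _ (hFs (hI.1 i hi).1) _ (hFs (hI.1 i hi).2)

theorem integral_deriv_comp_integral_mul {f φ : ℝ → ℝ} (hf : IntervalIntegrable f volume c d)
    (hφ : ContDiff ℝ 1 φ) (ha : a ∈ Set.uIcc c d) (hb : b ∈ Set.uIcc c d) :
    ∫ x in a..b, deriv φ (∫ s in c..x, f s) * f x =
      φ (∫ s in c..b, f s) - φ (∫ s in c..a, f s) := by
  set F : ℝ → ℝ := fun x => ∫ s in c..x, f s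
  have hab : Set.uIcc a b ⊆ Set.uIcc c d := Set.uIcc_subset_uIcc ha hb
  have hF : AbsolutelyContinuousOnInterval F a b :=
    (hf.absolutelyContinuousOnInterval_intervalIntegral Set.left_mem_uIcc).mono hab
  obtain ⟨K, hK⟩ := hφ.locallyLipschitz.locallyLipschitzOn.exists_lipschitzOnWith_of_compact
    (isCompact_uIcc.image_of_continuousOn hF.continuousOn)
  have hφF : AbsolutelyContinuousOnInterval (φ ∘ F) a b :=
    absolutelyContinuousOnInterval_comp_of_lipschitzOnWith hK hF (Set.mapsTo_image F _)
  change _ = (φ ∘ F) b - (φ ∘ F) a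
  rw [← hφF.integral_deriv_eq_sub]
  refine intervalIntegral.integral_congr_ae ?_
  filter_upwards [hf.ae_hasDerivAt_integral] with x hFderiv hx
  have hFx : HasDerivAt F (f x) x :=
    hFderiv (hab (Set.uIoc_subset_uIcc hx)) c Set.left_mem_uIcc
  exact ((hφ.differentiable one_ne_zero (F x)).hasDerivAt.comp x hFx).deriv.symm

theorem integral_mul_exp_neg_integral {f : ℝ → ℝ} (hf : IntervalIntegrable f volume c d)
    (ha : a ∈ Set.uIcc c d) (hb : b ∈ Set.uIcc c d) :
    ∫ x in a..b, f x * Real.exp (-∫ s in c..x, f s) =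
      Real.exp (-∫ s in c..a, f s) - Real.exp (-∫ s in c..b, f s) := by
  have hderiv (y : ℝ) : deriv (fun y => -Real.exp (-y)) y = Real.exp (-y) := by
    simpa using ((hasDerivAt_neg y).exp.neg).deriv
  have hchain := integral_deriv_comp_integral_mul hf (φ := fun y => -Real.exp (-y))
    (by fun_prop) ha hb
  simp only [hderiv, mul_comm _ (f _)] at hchain
  rw [hchain, neg_sub_neg]

theorem intervalIntegrable_mul_exp_neg_integral {f : ℝ → ℝ}
    (hf : IntervalIntegrable f volume a b) :
    IntervalIntegrable (fun x => f x * Real.exp (-∫ s in a..x, f s)) volume a b :=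
  hf.mul_continuousOn
    (hf.absolutelyContinuousOnInterval_intervalIntegral Set.left_mem_uIcc).continuousOn.neg.rexp

end AbsolutelyContinuous

section StepFunction

variable {E : Type*} [NormedAddCommGroup E] [NormedSpace ℝ E] {μ : Measure ℝ}
  {a b t : ℝ} {g : ℝ → E}

theorem integral_indicator_Ici [NullSingletonClass μ] (hb : b ∈ Set.Icc a t) :
    ∫ u in a..t, (Set.Ici b).indicator g u ∂μ = ∫ u in b..t, g u ∂μ := by
  have hinter : (Set.Ioi b ∩ Set.Ioc a t : Set ℝ) = Set.Ioc b t := by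
    rw [Set.inter_comm, Set.Ioc_inter_Ioi, sup_of_le_right hb.1]
  rw [intervalIntegral.integral_of_le (hb.1.trans hb.2), intervalIntegral.integral_of_le hb.2,
    integral_congr_ae (ae_restrict_of_ae (indicator_ae_eq_of_ae_eq_set Ioi_ae_eq_Ici.symm)),
    integral_indicator measurableSet_Ioi, Measure.restrict_restrict measurableSet_Ioi, hinter]

theorem integral_const_add_sum_jumps_smul [NullSingletonClass μ] {ι : Type*} (s : Finset ι)
    {τ : ι → ℝ} (c₀ : ℝ) (c : ι → ℝ) (hat : a ≤ t) (hτ : ∀ i ∈ s, a ≤ τ i)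
    (hg : IntervalIntegrable g μ a t) :
    ∫ u in a..t, (c₀ + ∑ i ∈ s with τ i ≤ u, c i) • g u ∂μ =
      c₀ • ∫ u in a..t, g u ∂μ + ∑ i ∈ s with τ i ≤ t, c i • ∫ u in τ i..t, g u ∂μ := by
  have hsteps : Set.EqOn (fun u => (c₀ + ∑ i ∈ s with τ i ≤ u, c i) • g u)
      (fun u => c₀ • g u + ∑ i ∈ s with τ i ≤ t, c i • (Set.Ici (τ i)).indicator g u)
      (Set.uIcc a t) := by
    intro u hu
    rw [Set.uIcc_of_le hat] at hu
    have hfilter : ({i ∈ s | τ i ≤ u} : Finset ι) = {i ∈ {i ∈ s | τ i ≤ t} | τ i ≤ u} := by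
      rw [filter_filter]
      exact filter_congr fun i _ => (and_iff_right_of_imp fun h => h.trans hu.2).symm
    simp only [add_smul, sum_smul, hfilter, sum_filter (fun i => τ i ≤ u),
      Set.indicator_apply, Set.mem_Ici, ite_smul, zero_smul, smul_ite, smul_zero]
  have hstep (i : ι) : IntervalIntegrable (fun u => c i • (Set.Ici (τ i)).indicator g u) μ a t :=
    IntervalIntegrable.smul ⟨hg.1.indicator measurableSet_Ici, hg.2.indicator measurableSet_Ici⟩ _
  have hconst : IntervalIntegrable (fun u => c₀ • g u) μ a t := hg.smul c₀
  rw [intervalIntegral.integral_congr hsteps,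
    intervalIntegral.integral_add hconst
      (by simpa only [sum_fn] using IntervalIntegrable.sum _ fun i _ => hstep i),
    intervalIntegral.integral_finsetSum fun i _ => hstep i, intervalIntegral.integral_smul]
  congr 1
  refine sum_congr rfl fun i hi => ?_
  obtain ⟨his, hit⟩ := mem_filter.1 hi
  rw [intervalIntegral.integral_smul, integral_indicator_Ici ⟨hτ i his, hit⟩]

end StepFunction

theorem prod_eq_one_add_sum_of_isLowerSet {ι R : Type*} [LinearOrder ι] [Fintype ι] [CommRing R]
    {s : Finset ι} (hs : IsLowerSet (s : Set ι)) (f : ι → R) :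
    ∏ i ∈ s, f i = 1 + ∑ i ∈ s, (f i - 1) * ∏ j with j < i, f j := by
  have hbelow {i : ι} (hi : i ∈ s) :
      ({j ∈ s | j < i} : Finset ι) = ({j | j < i} : Finset ι) := by
    ext j
    simpa using fun hji : j < i => hs hji.le hi
  calc ∏ i ∈ s, f i
      = ∏ i ∈ s, (1 + (f i - 1)) := prod_congr rfl fun i _ => (add_sub_cancel 1 (f i)).symm
    _ = 1 + ∑ i ∈ s, (f i - 1) * ∏ j ∈ s with j < i, f j := by
      simp_rw [prod_one_add_ordered s (fun i => f i - 1), add_sub_cancel]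
    _ = 1 + ∑ i ∈ s, (f i - 1) * ∏ j with j < i, f j :=
      congrArg (1 + ·) (sum_congr rfl fun i hi => by rw [hbelow hi])

section JumpExponential

variable {ι : Type*} [Fintype ι]

/-- The jump exponential `(∏_{τ_i ≤ t} a_i) · exp(−∫₀ᵗ f)`: it is multiplied by `a i` at time `τ i`
and decays at rate `f` between jumps. -/
noncomputable def jumpExp (τ a : ι → ℝ) (f : ℝ → ℝ) (t : ℝ) : ℝ :=
  (∏ i with τ i ≤ t, a i) * Real.exp (-∫ s in (0 : ℝ)..t, f s)

/-- The value of the jump exponential at time `τ i` just before it is multiplied by `a i`. This is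
its left limit `V_{τ_i⁻}` when `τ` is strictly increasing; simultaneous jumps are taken to occur
one after the other, in the order of their indices. -/
noncomputable def jumpExpBefore [LinearOrder ι] (τ a : ι → ℝ) (f : ℝ → ℝ) (i : ι) : ℝ :=
  (∏ j with j < i, a j) * Real.exp (-∫ s in (0 : ℝ)..τ i, f s)

variable {τ a : ι → ℝ} {f : ℝ → ℝ} {t : ℝ}

theorem jumpExp_pos (ha : ∀ i, τ i ≤ t → 0 < a i) : 0 < jumpExp τ a f t :=
  mul_pos (prod_pos fun i hi => ha i (mem_filter.1 hi).2) (Real.exp_pos _)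

theorem jumpExp_inv (τ a : ι → ℝ) (f : ℝ → ℝ) (t : ℝ) :
    jumpExp τ a⁻¹ (-f) t = (jumpExp τ a f t)⁻¹ := by
  simp [jumpExp, Real.exp_neg, mul_comm]

variable [LinearOrder ι]

theorem jumpExpBefore_inv (τ a : ι → ℝ) (f : ℝ → ℝ) (i : ι) :
    jumpExpBefore τ a⁻¹ (-f) i = (jumpExpBefore τ a f i)⁻¹ := by
  simp [jumpExpBefore, Real.exp_neg, mul_comm]

theorem jumpExp_eq_one_add_sum_mul_exp (hτ : Monotone τ) :
    jumpExp τ a f t = (1 + ∑ i with τ i ≤ t, (a i - 1) * ∏ j with j < i, a j) *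
      Real.exp (-∫ s in (0 : ℝ)..t, f s) := by
  have hlower : IsLowerSet (({i | τ i ≤ t} : Finset ι) : Set ι) := by
    intro i j hji hi
    simp only [coe_filter, mem_univ, true_and, Set.mem_ofPred_eq] at hi ⊢
    exact (hτ hji).trans hi
  rw [jumpExp, prod_eq_one_add_sum_of_isLowerSet hlower]

theorem jumpExp_eq_one_add_sum_sub_integral (hτ : Monotone τ) (hτ₀ : ∀ i, 0 ≤ τ i) (ht : 0 ≤ t)
    (hf : IntervalIntegrable f volume 0 t) :
    jumpExp τ a f t = 1 + ∑ i with τ i ≤ t, (a i - 1) * jumpExpBefore τ a f i -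
      ∫ s in (0 : ℝ)..t, f s * jumpExp τ a f s := by
  set E : ℝ → ℝ := fun u => Real.exp (-∫ s in (0 : ℝ)..u, f s) with hE
  set c : ι → ℝ := fun i => (a i - 1) * ∏ j with j < i, a j
  have hV (u : ℝ) : jumpExp τ a f u = (1 + ∑ i with τ i ≤ u, c i) * E u :=
    jumpExp_eq_one_add_sum_mul_exp hτ
  have hE₀ : E 0 = 1 := by simp [hE]
  have hfE (u : ℝ) (hu : u ∈ Set.Icc 0 t) : ∫ s in u..t, f s * E s = E u - E t :=
    integral_mul_exp_neg_integral hf (Set.uIcc_of_le ht ▸ hu) Set.right_mem_uIcc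
  have hint : ∫ s in (0 : ℝ)..t, f s * jumpExp τ a f s =
      (1 - E t) + ∑ i with τ i ≤ t, c i * (E (τ i) - E t) := by
    calc ∫ s in (0 : ℝ)..t, f s * jumpExp τ a f s
        = ∫ s in (0 : ℝ)..t, (1 + ∑ i with τ i ≤ s, c i) • (f s * E s) := by
          simp only [hV, smul_eq_mul, mul_left_comm]
      _ = 1 • (∫ s in (0 : ℝ)..t, f s * E s) +
            ∑ i with τ i ≤ t, c i • ∫ s in τ i..t, f s * E s :=
          integral_const_add_sum_jumps_smul univ 1 c ht (fun i _ => hτ₀ i)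
            (intervalIntegrable_mul_exp_neg_integral hf)
      _ = (1 - E t) + ∑ i with τ i ≤ t, c i * (E (τ i) - E t) := by
          rw [hfE 0 ⟨le_rfl, ht⟩, hE₀, one_smul]
          congr 1
          exact sum_congr rfl fun i hi => by
            rw [hfE (τ i) ⟨hτ₀ i, (mem_filter.1 hi).2⟩, smul_eq_mul]
  have hbefore (i : ι) : (a i - 1) * jumpExpBefore τ a f i = c i * E (τ i) :=
    (mul_assoc _ _ _).symm
  simp only [hint, hV t, hbefore, mul_sub, sum_sub_distrib, ← sum_mul]
  ring

theorem jump_exponential_inverse_formula_general (hτ : Monotone τ) (hτ₀ : ∀ i, 0 ≤ τ i)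
    (ht : 0 ≤ t) (ha : ∀ i, τ i ≤ t → a i ≠ 0) (hf : IntervalIntegrable f volume 0 t) :
    (jumpExp τ a f t)⁻¹ =
      1 - ∑ i with τ i ≤ t, (a i - 1) / (a i * jumpExpBefore τ a f i) +
        ∫ s in (0 : ℝ)..t, f s * (jumpExp τ a f s)⁻¹ := by
  have hjump : ∑ i with τ i ≤ t, (a⁻¹ i - 1) * (jumpExpBefore τ a f i)⁻¹ =
      -∑ i with τ i ≤ t, (a i - 1) / (a i * jumpExpBefore τ a f i) := by
    rw [← sum_neg_distrib]
    refine sum_congr rfl fun i hi => ?_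
    have hai : a i ≠ 0 := ha i (mem_filter.1 hi).2
    rw [Pi.inv_apply, ← div_div, div_eq_mul_inv _ (jumpExpBefore τ a f i), sub_div, div_self hai,
      one_div, ← neg_mul, neg_sub]
  have hlinear := jumpExp_eq_one_add_sum_sub_integral (a := a⁻¹) hτ hτ₀ ht hf.neg
  simpa only [jumpExp_inv, jumpExpBefore_inv, hjump, Pi.neg_apply, neg_mul,
    intervalIntegral.integral_neg, sub_neg_eq_add, ← sub_eq_add_neg] using hlinear

end JumpExponential

/-- Pathwise form of the key identity of Appendix A of the paper,
`Ẑ_t⁻¹ = 1 − ∫₀ᵗ ((λ̂_s − 1)/(λ̂_s Ẑ_{s−})) (dY_s − λ̂_s ds)`: for the jump exponential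
`Z_t = (∏_{τ_i ≤ t} λ(τ_i)) · exp(−∫₀ᵗ (λ(s)−1) ds)` (which is strictly positive),
`Z_t⁻¹ = 1 − ∑_{τ_i ≤ t} (λ(τ_i) − 1)/(λ(τ_i) Z_{τ_i⁻}) + ∫₀ᵗ (λ(s)−1) Z_s⁻¹ ds`. -/
theorem jump_exponential_inverse_formula
    (T : ℝ) (hT : 0 < T) (n : ℕ) (τ : Fin n → ℝ) (hτmono : StrictMono τ)
    (hτpos : ∀ i, 0 < τ i) (hτle : ∀ i, τ i ≤ T)
    (lam : ℝ → ℝ) (hlamcont : ContinuousOn lam (Set.Icc 0 T))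
    (hlampos : ∀ s ∈ Set.Icc (0:ℝ) T, 0 < lam s)
    (Z : ℝ → ℝ) (Zm : Fin n → ℝ)
    (hZ : ∀ t, Z t = (∏ i ∈ Finset.univ.filter (fun i => τ i ≤ t), lam (τ i)) *
      Real.exp (-(∫ s in (0:ℝ)..t, (lam s - 1))))
    (hZm : ∀ i, Zm i = (∏ j ∈ Finset.univ.filter (fun j => j < i), lam (τ j)) *
      Real.exp (-(∫ s in (0:ℝ)..(τ i), (lam s - 1)))) :
    (∀ t ∈ Set.Icc (0:ℝ) T, 0 < Z t) ∧
    ∀ t ∈ Set.Icc (0:ℝ) T,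
      (Z t)⁻¹ = 1 - (∑ i ∈ Finset.univ.filter (fun i => τ i ≤ t),
          (lam (τ i) - 1) / (lam (τ i) * Zm i)) +
        ∫ s in (0:ℝ)..t, (lam s - 1) * (Z s)⁻¹ := by
  obtain rfl : Z = jumpExp τ (fun i => lam (τ i)) (fun s => lam s - 1) := funext hZ
  obtain rfl : Zm = jumpExpBefore τ (fun i => lam (τ i)) (fun s => lam s - 1) := funext hZm
  have hjump (i : Fin n) : 0 < lam (τ i) := hlampos _ ⟨(hτpos i).le, hτle i⟩
  refine ⟨fun t _ => jumpExp_pos fun i _ => hjump i, fun t ht => ?_⟩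
  have hdecay : ContinuousOn (fun s => lam s - 1) (Set.Icc 0 t) :=
    (hlamcont.mono (Set.Icc_subset_Icc_right ht.2)).sub continuousOn_const
  exact jump_exponential_inverse_formula_general hτmono.monotone (fun i => (hτpos i).le) ht.1
    (fun i _ => (hjump i).ne') (hdecay.intervalIntegrable_of_Icc ht.1)
end
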